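/- Let S be a nonempty closed subset of Euclidean space ℝ^d, let x ∈ ℝ^d, and let p ∈ S satisfy dist(x, p) = infDist(x, S). Then for every t with 0 < t < 1, the point y = x + t • (p − x) has p as its UNIQUE nearest point in S: if q ∈ S satisfies dist(y, q) = infDist(y, S), then q = p. -/

import Mathlib

/-!
The closed ball about a point `y` of the segment `[x, p]` with `p` on its boundary lies inside the
closed ball about `x` through `p`. By strict convexity the two spheres touch at `p` only, and a
nearest point to `y` in `S` lies in the smaller ball but not in the interior of the larger one.
-/

open AffineMap Metric

theorem dist_eq_infDist_of_dist_add_dist_eq {α : Type*} [PseudoMetricSpace α] {S : Set α}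
    {x y p : α} (hp : p ∈ S) (hxp : dist x p = infDist x S)
    (hy : dist x y + dist y p = dist x p) : dist y p = infDist y S := by
  refine le_antisymm ?_ (infDist_le_dist_of_mem hp)
  have hlip : infDist x S ≤ infDist y S + dist x y := infDist_le_infDist_add_dist
  linarith

section StrictConvexSpace

variable {V P : Type*} [NormedAddCommGroup V] [NormedSpace ℝ V] [StrictConvexSpace ℝ V]
  [MetricSpace P] [NormedAddTorsor V P] {x p q : P} {t : ℝ}

theorem eq_of_dist_lineMap_le_of_dist_le (ht₀ : 0 < t) (ht₁ : t ≤ 1)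
    (hy : dist (lineMap x p t) q ≤ dist (lineMap x p t) p) (hx : dist x p ≤ dist x q) :
    q = p := by
  have hxy : dist x (lineMap x p t) = t * dist x p := by
    rw [dist_left_lineMap, Real.norm_of_nonneg ht₀.le]
  have hyp : dist (lineMap x p t) p = (1 - t) * dist x p := by
    rw [dist_lineMap_right, Real.norm_of_nonneg (sub_nonneg.2 ht₁)]
  have htri := dist_triangle x (lineMap x p t) q
  have hxq : dist x q = dist x p := by linarith
  have hyq : dist (lineMap x p t) q = (1 - t) * dist x p := by linarith
  have hline : lineMap x p t = lineMap x q t :=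
    eq_lineMap_of_dist_eq_mul_of_dist_eq_mul (by rw [hxy, hxq]) (by rw [hyq, hxq])
  rw [← homothety_eq_lineMap, ← homothety_eq_lineMap] at hline
  exact ((homothety_inj x ht₀.ne').1 hline).symm

theorem closest_point_unique_on_open_normal_segment_general {S : Set P} (hp : p ∈ S)
    (hxp : dist x p = infDist x S) (ht₀ : 0 < t) (ht₁ : t ≤ 1) (hq : q ∈ S) :
    dist (lineMap x p t) q = infDist (lineMap x p t) S ↔ q = p := by
  constructor
  · intro hyq
    exact eq_of_dist_lineMap_le_of_dist_le ht₀ ht₁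
      (hyq.trans_le (infDist_le_dist_of_mem hp)) (hxp.trans_le (infDist_le_dist_of_mem hq))
  · rintro rfl
    have hbtw : Wbtw ℝ x (lineMap x q t) q := ⟨t, ⟨ht₀.le, ht₁⟩, rfl⟩
    exact dist_eq_infDist_of_dist_add_dist_eq hp hxp hbtw.dist_add_dist

end StrictConvexSpace

/-- If `p ∈ S` is a nearest point of the nonempty closed set
`S ⊆ ℝ^d` to `x`, then for every `0 < t < 1` the point `y = x + t • (p - x)`
has `p` as its unique nearest point in `S`: any `q ∈ S` realizing the
infimum distance to `y` equals `p`. -/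
theorem closest_point_unique_on_open_normal_segment
    {d : ℕ} (S : Set (EuclideanSpace ℝ (Fin d)))
    (hS : S.Nonempty) (hSclosed : IsClosed S)
    (x p : EuclideanSpace ℝ (Fin d)) (hp : p ∈ S)
    (hdist : dist x p = Metric.infDist x S) :
    ∀ t : ℝ, 0 < t → t < 1 →
      ∀ q ∈ S, dist (x + t • (p - x)) q = Metric.infDist (x + t • (p - x)) S →
        q = p := by
  intro t ht₀ ht₁ q hq hyq
  rw [add_comm, ← lineMap_apply_module'] at hyq
  exact (closest_point_unique_on_open_normal_segment_general hp hdist ht₀ ht₁.le hq).1 hyq
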